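/- For every even natural number n with n ≠ 2 (i.e., n = 0 or n even with n ≥ 4), the function μ_n is a polynomial of degree exactly n: the coefficient c_{2k}(n) vanishes whenever 2k > n, the coefficient c_n(n) is nonzero, and hence there exists a polynomial p ∈ ℂ[X] of degree n with μ_n(z) = p(z) for all z ∈ ℂ. -/

import Mathlib

/-- Even coefficients c_{2k}(n) of the generalized power series. -/
noncomputable def ceven (n k : ℕ) : ℂ :=
  if k = 0 then 1
  else if k = 1 then -(n : ℂ)
  else (-1) ^ k * 2 ^ k * (n : ℂ) * ((n : ℂ) - ((2 * (k : ℂ) - 1) ^ 2 + 1)) *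
    (∏ j ∈ Finset.Icc 1 (k - 2), ((n : ℂ) - 2 * (1 + (j : ℂ)))) /
      (Nat.factorial (2 * k) : ℂ)

/-- Odd coefficients: `codd n k` is c_{2k-1}(n), for k ≥ 1. -/
noncomputable def codd (n k : ℕ) : ℂ :=
  if k ≤ 1 then 1
  else (-1) ^ (k + 1) * 2 ^ (k - 1) * ((n : ℂ) - ((2 * ((k : ℂ) - 1)) ^ 2 + 1)) *
    (∏ j ∈ Finset.Icc 1 (k - 2), ((n : ℂ) - (2 * (1 + (j : ℂ)) - 1))) /
      (Nat.factorial (2 * k - 1) : ℂ)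

/-- μₙ(z) = Σ_{k≥0} c_{2k}(n)·z^{2k}. -/
noncomputable def muF (n : ℕ) (z : ℂ) : ℂ := ∑' k : ℕ, ceven n k * z ^ (2 * k)

/-- νₙ(z) = Σ_{k≥1} c_{2k-1}(n)·z^{2k-1}. -/
noncomputable def nuF (n : ℕ) (z : ℂ) : ℂ := ∑' k : ℕ, codd n (k + 1) * z ^ (2 * k + 1)

/-- βₙ = μₙ + νₙ. -/
noncomputable def betaF (n : ℕ) (z : ℂ) : ℂ := muF n z + nuF n z

theorem stmt10 (n : ℕ) (hev : Even n) (hn : n ≠ 2) :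
    (∀ k : ℕ, 2 * k > n → ceven n k = 0) ∧
    ceven n (n / 2) ≠ 0 ∧
    ∃ p : Polynomial ℂ, p.degree = n ∧ ∀ z : ℂ, muF n z = p.eval z := by
  obtain ⟨m, rfl⟩ := hev
  have hm1 : m ≠ 1 := by omega
  have h1 : ∀ k : ℕ, 2 * k > m + m → ceven (m + m) k = 0 := by
    intro k hk
    unfold ceven
    rcases Nat.eq_zero_or_pos m with rfl | hm
    · have : k ≠ 0 := by omega
      simp [this]
    · rw [if_neg (by omega), if_neg (by omega)]
      have : ∏ j ∈ Finset.Icc 1 (k - 2), (((m + m : ℕ) : ℂ) - 2 * (1 + (j : ℂ))) = 0 := by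
        apply Finset.prod_eq_zero (i := m - 1)
        · rw [Finset.mem_Icc]; omega
        · rw [Nat.cast_sub (by omega)]; push_cast; ring
      rw [this]; simp
  have h2 : ceven (m + m) m ≠ 0 := by
    unfold ceven
    rcases Nat.eq_zero_or_pos m with rfl | hm
    · simp
    · rw [if_neg (by omega), if_neg (by omega)]
      have hmc : (m : ℂ) ≠ 0 := by exact_mod_cast (by omega : m ≠ 0)
      have hmc1 : (m : ℂ) - 1 ≠ 0 := by
        rw [sub_ne_zero]; exact_mod_cast hm1
      have hmc2 : 2 * (m : ℂ) - 1 ≠ 0 := by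
        rw [sub_ne_zero]; exact_mod_cast (by omega : 2 * m ≠ 1)
      have e1 : ((m + m : ℕ) : ℂ) - ((2 * (m : ℂ) - 1) ^ 2 + 1)
          = -2 * (2 * (m : ℂ) - 1) * ((m : ℂ) - 1) := by push_cast; ring
      have e2 : ∏ j ∈ Finset.Icc 1 (m - 2), (((m + m : ℕ) : ℂ) - 2 * (1 + (j : ℂ))) ≠ 0 := by
        rw [Finset.prod_ne_zero_iff]
        intro j hj
        rw [Finset.mem_Icc] at hj
        rw [sub_ne_zero]
        exact_mod_cast (by omega : m + m ≠ 2 * (1 + j))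
      have e3 : ((m + m : ℕ) : ℂ) ≠ 0 := by exact_mod_cast (by omega : m + m ≠ 0)
      have e4 : (Nat.factorial (2 * m) : ℂ) ≠ 0 := by exact_mod_cast Nat.factorial_ne_zero _
      rw [e1]
      refine div_ne_zero (mul_ne_zero (mul_ne_zero (mul_ne_zero (mul_ne_zero ?_ ?_) e3) ?_) e2) e4
      · exact pow_ne_zero _ (by norm_num)
      · exact pow_ne_zero _ (by norm_num)
      · exact mul_ne_zero (mul_ne_zero (by norm_num) hmc2) hmc1
  have hd : (m + m) / 2 = m := by omega
  refine ⟨h1, by rw [hd]; exact h2,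
    ∑ k ∈ Finset.range (m + 1),
      Polynomial.C (ceven (m + m) k) * Polynomial.X ^ (2 * k), ?_, ?_⟩
  · rw [Finset.sum_range_succ, Polynomial.degree_add_eq_right_of_degree_lt]
    · rw [Polynomial.degree_C_mul_X_pow _ h2, two_mul]
    · rw [Polynomial.degree_C_mul_X_pow _ h2]
      refine (Polynomial.degree_sum_le _ _).trans_lt ?_
      rw [Finset.sup_lt_iff (WithBot.bot_lt_coe _)]
      intro k hk
      rw [Finset.mem_range] at hk
      refine (Polynomial.degree_C_mul_X_pow_le _ _).trans_lt ?_
      exact_mod_cast (by omega : 2 * k < 2 * m)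
  · intro z
    unfold muF
    rw [tsum_eq_sum (s := Finset.range (m + 1))]
    · simp [Polynomial.eval_finset_sum]
    · intro k hk
      rw [Finset.mem_range] at hk
      rw [h1 k (by omega), zero_mul]
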